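/- Let F : ℝ^m → ℝ be L-smooth and bounded below, set L' = L + 1, and let (z_k) be generated by z_{k+1} = z_k + t_k s_k with ‖g_k − ∇F(z_k)‖₂ ≤ δ_k, c₁‖g_k‖₂² ≤ −g_kᵀ s_k, ‖s_k‖₂ ≤ c₂‖g_k‖₂, and δ_k ≤ β‖g_k‖₂ for some β ∈ [0, c₁/(c₂√L')). Suppose t_k ∈ [t̄₁ + γ, t̄₂ − γ] for all k, where t̄₁ = (c₁ − √Δ)/(c₂² L'), t̄₂ = (c₁ + √Δ)/(c₂² L'), Δ = c₁² − L' c₂² β², and γ ∈ (0, (t̄₂ − t̄₁)/2]. Then the series Σ_{k=0}^{∞} ‖g_k‖₂² converges. -/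

import Mathlib

open scoped RealInnerProductSpace

/-!
Let `q(t) = 2 c₁ t - c₂² L' t² - β²`. The quadratic upper bound of an `L`-smooth function and
Young's inequality on the gradient error, whose cost is the extra `1` in `L' = L + 1`, give
`F z_k - F z_{k+1} ≥ q(t_k) / 2 * ‖g_k‖²`. The step-size bounds `t₁`, `t₂` are the roots of the
concave quadratic `q`, so a step lying between them at distance at least `γ` from both has
`q(t_k) ≥ c₂² L' γ²`. The decreases of `F` therefore dominate a fixed multiple of `‖g_k‖²`, and
they telescope to a bounded sum.
-/

lemma apply_one_le_of_deriv_le_affine {φ φ' : ℝ → ℝ} {a b : ℝ}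
    (hφ : ∀ τ ∈ Set.Icc (0 : ℝ) 1, HasDerivAt φ (φ' τ) τ)
    (hφ' : ∀ τ ∈ Set.Ico (0 : ℝ) 1, φ' τ ≤ a + b * τ) :
    φ 1 ≤ φ 0 + a + b / 2 := by
  have hquad (τ : ℝ) :
      HasDerivAt (fun τ ↦ φ 0 + a * τ + b / 2 * τ ^ 2) (a + b * τ) τ := by
    refine ((((hasDerivAt_id τ).const_mul a).const_add (φ 0)).add
      ((hasDerivAt_pow 2 τ).const_mul (b / 2))).congr_deriv ?_
    norm_num
    ring
  have hle := image_le_of_deriv_right_le_deriv_boundary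
    (HasDerivAt.continuousOn hφ)
    (fun τ hτ ↦ (hφ τ (Set.Ico_subset_Icc_self hτ)).hasDerivWithinAt)
    (by simp)
    (HasDerivAt.continuousOn fun τ _ ↦ hquad τ)
    (fun τ _ ↦ (hquad τ).hasDerivWithinAt)
    hφ' (Set.right_mem_Icc.2 zero_le_one)
  simpa using hle

lemma le_add_sq_of_norm_fderiv_sub_le {E : Type*} [NormedAddCommGroup E] [NormedSpace ℝ E]
    {f : E → ℝ} {f' : E → StrongDual ℝ E} {L : ℝ} {x y : E}
    (hf : ∀ w ∈ segment ℝ x y, HasFDerivAt f (f' w) w)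
    (hLip : ∀ w ∈ segment ℝ x y, ‖f' w - f' x‖ ≤ L * ‖w - x‖) :
    f y ≤ f x + f' x (y - x) + L / 2 * ‖y - x‖ ^ 2 := by
  let path : ℝ → E := AffineMap.lineMap x y
  have hpath {τ : ℝ} (hτ : τ ∈ Set.Icc (0 : ℝ) 1) : path τ ∈ segment ℝ x y :=
    segment_eq_image_lineMap ℝ x y ▸ Set.mem_image_of_mem _ hτ
  have hderiv (τ : ℝ) (hτ : τ ∈ Set.Icc (0 : ℝ) 1) :
      HasDerivAt (f ∘ path) (f' (path τ) (y - x)) τ :=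
    (hf _ (hpath hτ)).comp_hasDerivAt τ AffineMap.hasDerivAt_lineMap
  have hslope (τ : ℝ) (hτ : τ ∈ Set.Ico (0 : ℝ) 1) :
      f' (path τ) (y - x) ≤ f' x (y - x) + L * ‖y - x‖ ^ 2 * τ := by
    have hdist : ‖path τ - x‖ = τ * ‖y - x‖ := by
      simp [path, AffineMap.lineMap_apply, norm_smul, abs_of_nonneg hτ.1]
    have hvar : (f' (path τ) - f' x) (y - x) ≤ L * (τ * ‖y - x‖) * ‖y - x‖ :=
      (le_abs_self _).trans <| (f' (path τ) - f' x).le_of_opNorm_le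
        (hdist ▸ hLip _ (hpath (Set.Ico_subset_Icc_self hτ))) (y - x)
    rw [sub_apply] at hvar
    linarith
  have hle := apply_one_le_of_deriv_le_affine hderiv hslope
  simp only [path, Function.comp_apply, AffineMap.lineMap_apply_one,
    AffineMap.lineMap_apply_zero] at hle
  linarith

lemma le_add_inner_add_sq_of_norm_gradient_sub_le
    {E : Type*} [NormedAddCommGroup E] [InnerProductSpace ℝ E] [CompleteSpace E]
    {f : E → ℝ} {L : ℝ} {x y : E}
    (hf : ∀ w ∈ segment ℝ x y, DifferentiableAt ℝ f w)
    (hLip : ∀ w ∈ segment ℝ x y, ‖gradient f w - gradient f x‖ ≤ L * ‖w - x‖) :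
    f y ≤ f x + ⟪gradient f x, y - x⟫ + L / 2 * ‖y - x‖ ^ 2 := by
  have hle := le_add_sq_of_norm_fderiv_sub_le (fun w hw ↦ (hf w hw).hasFDerivAt)
    (fun w hw ↦ by
      rw [← toDual_gradient, ← toDual_gradient, ← map_sub, LinearIsometryEquiv.norm_map]
      exact hLip w hw)
  rwa [← inner_gradient_left] at hle

/-- The requirements on one step of the inexact general descent method at a point with gradient `v`:
the inexact gradient `g` has error at most `β` relative to its own norm, and the direction `s` is a
descent direction for `g`, up to the constant `c₁`, of length at most `c₂ * ‖g‖`. -/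
structure IsInexactDescentDirection {E : Type*} [NormedAddCommGroup E] [InnerProductSpace ℝ E]
    (c₁ c₂ β : ℝ) (v g s : E) : Prop where
  error_le : ‖g - v‖ ≤ β * ‖g‖
  descent : c₁ * ‖g‖ ^ 2 ≤ -⟪g, s⟫
  norm_le : ‖s‖ ≤ c₂ * ‖g‖

namespace IsInexactDescentDirection

variable {E : Type*} [NormedAddCommGroup E] [InnerProductSpace ℝ E]
  {c₁ c₂ β : ℝ} {v g s : E}

lemma inner_le (h : IsInexactDescentDirection c₁ c₂ β v g s) :
    ⟪v, s⟫ ≤ -(c₁ * ‖g‖ ^ 2) + β * ‖g‖ * ‖s‖ := by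
  have herror : -⟪g - v, s⟫ ≤ β * ‖g‖ * ‖s‖ :=
    calc -⟪g - v, s⟫ ≤ ‖g - v‖ * ‖s‖ := (neg_le_abs _).trans (abs_real_inner_le_norm _ _)
      _ ≤ β * ‖g‖ * ‖s‖ := by gcongr; exact h.error_le
  rw [inner_sub_left] at herror
  linarith [h.descent]

lemma quadratic_model_le (h : IsInexactDescentDirection c₁ c₂ β v g s) {L t : ℝ}
    (hL : 0 ≤ L + 1) (ht : 0 ≤ t) :
    ⟪v, t • s⟫ + L / 2 * ‖t • s‖ ^ 2 ≤
      -((2 * c₁ * t - c₂ ^ 2 * (L + 1) * t ^ 2 - β ^ 2) / 2 * ‖g‖ ^ 2) := by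
  have hyoung : 2 * (β * ‖g‖) * (t * ‖s‖) ≤ (β * ‖g‖) ^ 2 + (t * ‖s‖) ^ 2 :=
    two_mul_le_add_sq _ _
  have hlength : (L + 1) * (t * ‖s‖) ^ 2 ≤ (L + 1) * (t * (c₂ * ‖g‖)) ^ 2 := by
    gcongr
    exact h.norm_le
  rw [inner_smul_right, norm_smul, Real.norm_of_nonneg ht]
  calc t * ⟪v, s⟫ + L / 2 * (t * ‖s‖) ^ 2
      ≤ t * (-(c₁ * ‖g‖ ^ 2) + β * ‖g‖ * ‖s‖) + L / 2 * (t * ‖s‖) ^ 2 := by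
        gcongr
        exact h.inner_le
    _ ≤ -(t * (c₁ * ‖g‖ ^ 2)) + (β * ‖g‖) ^ 2 / 2 + (L + 1) * (t * ‖s‖) ^ 2 / 2 := by
        linarith
    _ ≤ -(t * (c₁ * ‖g‖ ^ 2)) + (β * ‖g‖) ^ 2 / 2 + (L + 1) * (t * (c₂ * ‖g‖)) ^ 2 / 2 := by
        linarith
    _ = -((2 * c₁ * t - c₂ ^ 2 * (L + 1) * t ^ 2 - β ^ 2) / 2 * ‖g‖ ^ 2) := by ring

end IsInexactDescentDirection

lemma mul_sub_root_mul_root_sub {a b c : ℝ} (ha : a ≠ 0) (hdisc : 0 ≤ b ^ 2 - a * c) (t : ℝ) :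
    a * ((t - (b - √(b ^ 2 - a * c)) / a) * ((b + √(b ^ 2 - a * c)) / a - t)) =
      2 * b * t - a * t ^ 2 - c := by
  field_simp
  linear_combination Real.sq_sqrt hdisc

lemma mul_sq_le_of_mem_Icc_roots {a b c γ t : ℝ} (ha : 0 < a) (hγ : 0 < γ)
    (ht : t ∈ Set.Icc ((b - √(b ^ 2 - a * c)) / a + γ) ((b + √(b ^ 2 - a * c)) / a - γ)) :
    a * γ ^ 2 ≤ 2 * b * t - a * t ^ 2 - c := by
  have hroots : (b - √(b ^ 2 - a * c)) / a < (b + √(b ^ 2 - a * c)) / a := by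
    linarith [ht.1, ht.2]
  have hdisc : 0 < b ^ 2 - a * c := by
    rw [div_lt_div_iff_of_pos_right ha] at hroots
    exact Real.sqrt_pos.1 (by linarith)
  rw [← mul_sub_root_mul_root_sub ha.ne' hdisc.le, sq]
  gcongr
  · linarith [ht.1]
  · linarith [ht.1]
  · linarith [ht.2]

lemma summable_of_le_sub_succ {a φ : ℕ → ℝ} (ha : ∀ k, 0 ≤ a k)
    (hφ : BddBelow (Set.range φ)) (hle : ∀ k, a k ≤ φ k - φ (k + 1)) : Summable a := by
  obtain ⟨B, hB⟩ := hφ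
  refine summable_of_sum_range_le (c := φ 0 - B) ha fun n ↦ ?_
  calc ∑ k ∈ Finset.range n, a k ≤ ∑ k ∈ Finset.range n, (φ k - φ (k + 1)) :=
        Finset.sum_le_sum fun k _ ↦ hle k
    _ = φ 0 - φ n := Finset.sum_range_sub' φ n
    _ ≤ φ 0 - B := sub_le_sub_left (hB (Set.mem_range_self n)) _

lemma nonneg_of_norm_sub_le_mul {E G : Type*} [NormedAddCommGroup E] [Nontrivial E]
    [SeminormedAddCommGroup G] {f : E → G} {L : ℝ}
    (hf : ∀ x y, ‖f x - f y‖ ≤ L * ‖x - y‖) : 0 ≤ L := by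
  obtain ⟨x, y, hxy⟩ := exists_pair_ne E
  exact nonneg_of_mul_nonneg_left ((norm_nonneg _).trans (hf x y)) (norm_sub_pos_iff.2 hxy)

section Summability

variable {E : Type*} [NormedAddCommGroup E] [InnerProductSpace ℝ E] [CompleteSpace E]
  {F : E → ℝ} {L c₁ c₂ β γ : ℝ}

lemma IsInexactDescentDirection.sufficient_decrease {x g s : E} {t : ℝ}
    (h : IsInexactDescentDirection c₁ c₂ β (gradient F x) g s)
    (hF : ∀ w ∈ segment ℝ x (x + t • s), DifferentiableAt ℝ F w)
    (hLip : ∀ w ∈ segment ℝ x (x + t • s), ‖gradient F w - gradient F x‖ ≤ L * ‖w - x‖)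
    (hL : 0 ≤ L + 1) (ht : 0 ≤ t) :
    (2 * c₁ * t - c₂ ^ 2 * (L + 1) * t ^ 2 - β ^ 2) / 2 * ‖g‖ ^ 2 ≤ F x - F (x + t • s) := by
  have hupper : F (x + t • s) ≤ F x + ⟪gradient F x, t • s⟫ + L / 2 * ‖t • s‖ ^ 2 := by
    simpa only [add_sub_cancel_left] using le_add_inner_add_sq_of_norm_gradient_sub_le hF hLip
  linarith [h.quadratic_model_le hL ht]

theorem stmt_6_general (hF : Differentiable ℝ F)
    (hLip : ∀ x y, ‖gradient F x - gradient F y‖ ≤ L * ‖x - y‖)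
    {z s g : ℕ → E} {t : ℕ → ℝ} (hbdd : BddBelow (Set.range fun k ↦ F (z k)))
    (hc₁ : 0 < c₁) (hc₂ : 0 < c₂) (hstep : ∀ k, z (k + 1) = z k + t k • s k)
    (hdir : ∀ k, IsInexactDescentDirection c₁ c₂ β (gradient F (z k)) (g k) (s k))
    {Δ : ℝ} (hΔ : Δ = c₁ ^ 2 - (L + 1) * c₂ ^ 2 * β ^ 2) (hγ : 0 < γ)
    (ht : ∀ k, t k ∈ Set.Icc ((c₁ - √Δ) / (c₂ ^ 2 * (L + 1)) + γ)
      ((c₁ + √Δ) / (c₂ ^ 2 * (L + 1)) - γ)) :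
    Summable fun k ↦ ‖g k‖ ^ 2 := by
  obtain _ | _ := subsingleton_or_nontrivial E
  · have hg (k : ℕ) : g k = 0 := Subsingleton.elim _ _
    simp [hg]
  have hL : 0 ≤ L := nonneg_of_norm_sub_le_mul hLip
  set a := c₂ ^ 2 * (L + 1) with ha_def
  have ha : 0 < a := by positivity
  rw [mul_comm (L + 1), ← ha_def] at hΔ
  have hquad (k : ℕ) : a * γ ^ 2 ≤ 2 * c₁ * t k - a * t k ^ 2 - β ^ 2 :=
    mul_sq_le_of_mem_Icc_roots ha hγ (hΔ ▸ ht k)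
  have ht_nonneg (k : ℕ) : 0 ≤ t k := by
    have hpos : 0 ≤ a * γ ^ 2 + a * t k ^ 2 + β ^ 2 := by positivity
    have hmul : 0 ≤ 2 * c₁ * t k := by linarith [hquad k]
    exact nonneg_of_mul_nonneg_right hmul (by positivity)
  have hdecrease (k : ℕ) : a * γ ^ 2 / 2 * ‖g k‖ ^ 2 ≤ F (z k) - F (z (k + 1)) := by
    rw [hstep]
    refine le_trans ?_ ((hdir k).sufficient_decrease (fun w _ ↦ hF w) (fun w _ ↦ hLip w _)
      (by linarith) (ht_nonneg k))
    gcongr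
    exact hquad k
  exact (summable_mul_left_iff (by positivity : a * γ ^ 2 / 2 ≠ 0)).1 <|
    summable_of_le_sub_succ (fun k ↦ by positivity) hbdd hdecrease

end Summability

/-- summability of the squared inexact gradient norms under bounded step sizes. -/
theorem stmt_6 (m : ℕ) (F : EuclideanSpace ℝ (Fin m) → ℝ) (L L' : ℝ)
    (hdiff : Differentiable ℝ F)
    (hlip : ∀ x y : EuclideanSpace ℝ (Fin m), ‖gradient F x - gradient F y‖ ≤ L * ‖x - y‖)
    (hbdd : ∃ B : ℝ, ∀ x, B ≤ F x)
    (hL' : L' = L + 1)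
    (z s g : ℕ → EuclideanSpace ℝ (Fin m)) (t δ : ℕ → ℝ)
    (c₁ c₂ : ℝ) (hc₁ : 0 < c₁) (hc₂ : 0 < c₂)
    (hδ : ∀ k, 0 ≤ δ k)
    (hupd : ∀ k, z (k + 1) = z k + t k • s k)
    (herr : ∀ k, ‖g k - gradient F (z k)‖ ≤ δ k)
    (hdesc : ∀ k, c₁ * ‖g k‖ ^ 2 ≤ -⟪g k, s k⟫)
    (hbnd : ∀ k, ‖s k‖ ≤ c₂ * ‖g k‖)
    (β : ℝ) (hβ0 : 0 ≤ β) (hβ1 : β < c₁ / (c₂ * Real.sqrt L'))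
    (hδβ : ∀ k, δ k ≤ β * ‖g k‖)
    (Δ t₁ t₂ : ℝ)
    (hΔ : Δ = c₁ ^ 2 - L' * c₂ ^ 2 * β ^ 2)
    (ht₁ : t₁ = (c₁ - Real.sqrt Δ) / (c₂ ^ 2 * L'))
    (ht₂ : t₂ = (c₁ + Real.sqrt Δ) / (c₂ ^ 2 * L'))
    (γ : ℝ) (hγ0 : 0 < γ) (hγ1 : γ ≤ (t₂ - t₁) / 2)
    (htk : ∀ k, t k ∈ Set.Icc (t₁ + γ) (t₂ - γ)) :
    Summable (fun k => ‖g k‖ ^ 2) := by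
  subst hL' hΔ ht₁ ht₂
  exact stmt_6_general hdiff hlip (hbdd.imp fun _ hB ↦ Set.forall_mem_range.2 fun k ↦ hB (z k))
    hc₁ hc₂ hupd (fun k ↦ ⟨(herr k).trans (hδβ k), hdesc k, hbnd k⟩) rfl hγ0 htk
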